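/- Let β > 0. For all integers j ≥ 1, ℓ ≥ 1 and all t ≥ 0, if j ≤ (1/3)·e^{-2βt-1}·ℓ, then the iterated exponential integral satisfies I^ℓ_j(t) ≤ exp(-(1/3)·e^{-2βt-1}·ℓ). -/

import Mathlib

/-!
`I^ℓ_j(t)` is the probability that a Yule process with birth rate `β`, started from `j`
individuals, has at least `ℓ` births by time `t`. Conditioning on the first birth expresses
`I^(ℓ+1)_j` as an integral of `I^ℓ_(j+1)`. The number of births starting from one individual is
geometric, with generating function `q(t) = p / (1 - z (1 - p))` where `p = e^{-βt}`, and `q^j`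
solves the analogous integral equation. Comparing the two equations by induction on `ℓ` yields
the Chernoff bound `z ^ ℓ * I^ℓ_j(t) ≤ q(t) ^ j` for `z ≥ 1` with `z (1 - p) < 1`. At
`z = 1 + p / 2` one has `q(t) = 2 / (1 + p) ≤ e` and `z ≥ e^{p/3}`, so
`I^ℓ_j(t) ≤ e^{j - p ℓ / 3}`, and `p / 3 ≥ 2 c` for `c = e^{-2βt - 1} / 3`.
-/

open MeasureTheory

/-- The nested integral `∫₀^t ∫₀^{s_ℓ} ⋯ ∫₀^{s_2} e^{-β(s_2+⋯+s_ℓ)} e^{a s_1} ds_1 ⋯ ds_ℓ`,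
defined recursively in the number `ℓ` of integrations. -/
noncomputable def nestInt (β a : ℝ) : ℕ → ℝ → ℝ
  | 0, _ => 1
  | 1, t => ∫ s in (0:ℝ)..t, Real.exp (a * s)
  | (n + 2), t => ∫ s in (0:ℝ)..t, Real.exp (-β * s) * nestInt β a (n + 1) s

/-- The iterated exponential integral
`I^ℓ_j(t) = β^ℓ ((j+ℓ-1)!/(j-1)!) e^{-βjt} ∫₀^t ∫₀^{s_ℓ} ⋯ ∫₀^{s_2}
e^{-β(s_2+⋯+s_ℓ)} e^{β(j+ℓ-1)s_1} ds_1 ⋯ ds_ℓ`, with `I^0_j(t) = 1`. -/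
noncomputable def Iex (β : ℝ) (j ℓ : ℕ) (t : ℝ) : ℝ :=
  if ℓ = 0 then 1
  else β ^ ℓ * ((Nat.factorial (j + ℓ - 1) : ℝ) / (Nat.factorial (j - 1) : ℝ)) *
    Real.exp (-(β * j * t)) * nestInt β (β * ((j : ℝ) + (ℓ : ℝ) - 1)) ℓ t

open Real

lemma continuous_nestInt (β a : ℝ) : ∀ n, Continuous (nestInt β a n)
  | 0 => continuous_const
  | 1 => intervalIntegral.continuous_primitive
      (fun _ _ => (by fun_prop : Continuous fun s => exp (a * s)).intervalIntegrable _ _) 0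
  | n + 2 => by
    have ih := continuous_nestInt β a (n + 1)
    exact intervalIntegral.continuous_primitive (fun _ _ =>
      (by fun_prop : Continuous fun s => exp (-β * s) * nestInt β a (n + 1) s).intervalIntegrable
        _ _) 0

lemma Iex_zero (β : ℝ) (j : ℕ) (t : ℝ) : Iex β j 0 t = 1 := if_pos rfl

lemma continuous_Iex (β : ℝ) (j ℓ : ℕ) : Continuous (Iex β j ℓ) := by
  rcases eq_or_ne ℓ 0 with rfl | hℓ
  · simpa only [funext (Iex_zero β j)] using continuous_const
  · have hnest := continuous_nestInt β (β * ((j : ℝ) + (ℓ : ℝ) - 1)) ℓ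
    unfold Iex
    simp only [if_neg hℓ]
    fun_prop

lemma Iex_succ (β : ℝ) {j : ℕ} (hj : j ≠ 0) (ℓ : ℕ) (t : ℝ) :
    Iex β j (ℓ + 1) t =
      β * j * exp (-(β * j * t)) * ∫ s in (0 : ℝ)..t, exp (β * j * s) * Iex β (j + 1) ℓ s := by
  obtain ⟨k, rfl⟩ := Nat.exists_eq_succ_of_ne_zero hj
  have hk : (k.factorial : ℝ) ≠ 0 := by positivity
  rcases ℓ with _ | m
  · simp only [Iex, nestInt, Nat.succ_eq_add_one, zero_add, one_ne_zero, if_false, if_true,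
      Nat.add_sub_cancel, Nat.factorial_succ, Nat.cast_mul, Nat.cast_one, add_sub_cancel_right,
      pow_one, mul_one]
    field_simp
  · set a : ℝ := β * (((k + 1 : ℕ) : ℝ) + ((m + 1 + 1 : ℕ) : ℝ) - 1) with ha
    have hintegrand (s : ℝ) : exp (β * (k + 1 : ℕ) * s) * Iex β (k + 1 + 1) (m + 1) s =
        β ^ (m + 1) * ((k + m + 2).factorial / (k + 1).factorial) *
          (exp (-β * s) * nestInt β a (m + 1) s) := by
      have ha' : β * (((k + 1 + 1 : ℕ) : ℝ) + ((m + 1 : ℕ) : ℝ) - 1) = a := by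
        rw [ha]; push_cast; ring
      have hexp : exp (-β * s) =
          exp (β * (k + 1 : ℕ) * s) * exp (-(β * (k + 1 + 1 : ℕ) * s)) := by
        rw [← exp_add]; congr 1; push_cast; ring
      rw [Iex, if_neg m.succ_ne_zero, ha', hexp, Nat.add_sub_cancel,
        show k + 1 + 1 + (m + 1) - 1 = k + m + 2 by lia]
      ring
    simp only [Nat.succ_eq_add_one, hintegrand, intervalIntegral.integral_const_mul]
    rw [Iex, if_neg (m + 1).succ_ne_zero, ← ha, nestInt, Nat.add_sub_cancel,
      show k + 1 + (m + 1 + 1) - 1 = k + m + 2 by lia, Nat.factorial_succ k]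
    push_cast
    field_simp
    ring

/-- The generating function `E[z ^ N]` of the number `N` of births up to time `t` in a Yule process
with birth rate `β` started from one individual. It is the generating function of a geometric
variable with success probability `exp (-(β * t))`, and is only meaningful while the denominator is
positive. -/
noncomputable def yuleGenFun (β z t : ℝ) : ℝ :=
  exp (-(β * t)) / (1 - z * (1 - exp (-(β * t))))

section yuleGenFun

variable {β z t : ℝ}

lemma yuleGenFun_denom_pos_of_le (hβ : 0 ≤ β) (hz : 0 ≤ z)
    (hzt : 0 < 1 - z * (1 - exp (-(β * t)))) {s : ℝ} (hst : s ≤ t) :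
    0 < 1 - z * (1 - exp (-(β * s))) :=
  hzt.trans_le (by gcongr)

lemma one_le_yuleGenFun (hβ : 0 ≤ β) (ht : 0 ≤ t) (hz : 1 ≤ z)
    (hzt : 0 < 1 - z * (1 - exp (-(β * t)))) : 1 ≤ yuleGenFun β z t := by
  have hp : exp (-(β * t)) ≤ 1 := exp_le_one_iff.2 (neg_nonpos.2 (mul_nonneg hβ ht))
  rw [yuleGenFun, one_le_div hzt]
  linarith [le_mul_of_one_le_left (sub_nonneg.2 hp) hz]

lemma hasDerivAt_yuleGenFun (hzt : 1 - z * (1 - exp (-(β * t))) ≠ 0) :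
    HasDerivAt (yuleGenFun β z)
      (β * yuleGenFun β z t * (z * yuleGenFun β z t - 1)) t := by
  have hp : HasDerivAt (fun s => exp (-(β * s))) (exp (-(β * t)) * -β) t := by
    simpa using ((hasDerivAt_id t).const_mul β).neg.exp
  refine (hp.div (((hp.const_sub 1).const_mul z).const_sub 1) hzt).congr_deriv ?_
  rw [yuleGenFun]
  field_simp
  ring

lemma hasDerivAt_exp_mul_yuleGenFun_pow (j : ℕ) (hzt : 1 - z * (1 - exp (-(β * t))) ≠ 0) :
    HasDerivAt (fun s => exp (β * j * s) * yuleGenFun β z s ^ j)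
      (z * (β * j) * (exp (β * j * t) * yuleGenFun β z t ^ (j + 1))) t := by
  have hexp : HasDerivAt (fun s => exp (β * j * s)) (exp (β * j * t) * (β * j)) t := by
    simpa using ((hasDerivAt_id t).const_mul (β * j)).exp
  refine (hexp.mul ((hasDerivAt_yuleGenFun hzt).pow j)).congr_deriv ?_
  rcases j with _ | k
  · simp
  · simp only [Nat.add_sub_cancel, Pi.pow_apply]
    ring

lemma intervalIntegrable_exp_mul_yuleGenFun_pow (j n : ℕ)
    (hD : ∀ s ∈ Set.uIcc 0 t, 1 - z * (1 - exp (-(β * s))) ≠ 0) :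
    IntervalIntegrable (fun s => exp (β * j * s) * yuleGenFun β z s ^ n) volume 0 t := by
  have hq : ContinuousOn (yuleGenFun β z) (Set.uIcc 0 t) := fun s hs =>
    (hasDerivAt_yuleGenFun (hD s hs)).continuousAt.continuousWithinAt
  exact ContinuousOn.intervalIntegrable (by fun_prop)

lemma integral_exp_mul_yuleGenFun_pow (j : ℕ)
    (hD : ∀ s ∈ Set.uIcc 0 t, 1 - z * (1 - exp (-(β * s))) ≠ 0) :
    z * (β * j) * ∫ s in (0 : ℝ)..t, exp (β * j * s) * yuleGenFun β z s ^ (j + 1) =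
      exp (β * j * t) * yuleGenFun β z t ^ j - 1 := by
  rw [← intervalIntegral.integral_const_mul, intervalIntegral.integral_eq_sub_of_hasDerivAt
    (fun s hs => hasDerivAt_exp_mul_yuleGenFun_pow j (hD s hs))
    ((intervalIntegrable_exp_mul_yuleGenFun_pow j (j + 1) hD).const_mul _)]
  simp [yuleGenFun]

end yuleGenFun

lemma pow_mul_Iex_le_yuleGenFun_pow {β z : ℝ} (hβ : 0 ≤ β) (hz : 1 ≤ z) (ℓ : ℕ) {j : ℕ}
    (hj : j ≠ 0) {t : ℝ} (ht : 0 ≤ t) (hzt : 0 < 1 - z * (1 - exp (-(β * t)))) :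
    z ^ ℓ * Iex β j ℓ t ≤ yuleGenFun β z t ^ j := by
  have hz0 : 0 ≤ z := zero_le_one.trans hz
  induction ℓ generalizing j t with
  | zero => simpa [Iex_zero] using one_le_pow₀ (one_le_yuleGenFun hβ ht hz hzt)
  | succ ℓ ih =>
    have hD : ∀ s ≤ t, 0 < 1 - z * (1 - exp (-(β * s))) := fun s hs =>
      yuleGenFun_denom_pos_of_le hβ hz0 hzt hs
    have hD' : ∀ s ∈ Set.uIcc 0 t, 1 - z * (1 - exp (-(β * s))) ≠ 0 := fun s hs =>
      (hD s (Set.uIcc_of_le ht ▸ hs).2).ne'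
    have hint : z ^ ℓ * ∫ s in (0 : ℝ)..t, exp (β * j * s) * Iex β (j + 1) ℓ s ≤
        ∫ s in (0 : ℝ)..t, exp (β * j * s) * yuleGenFun β z s ^ (j + 1) := by
      have hcont := continuous_Iex β (j + 1) ℓ
      rw [← intervalIntegral.integral_const_mul]
      refine intervalIntegral.integral_mono_on ht
        (Continuous.intervalIntegrable (by fun_prop) _ _)
        (intervalIntegrable_exp_mul_yuleGenFun_pow j (j + 1) hD') fun s hs => ?_
      rw [mul_left_comm]
      gcongr
      exact ih j.succ_ne_zero hs.1 (hD s hs.2)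
    calc z ^ (ℓ + 1) * Iex β j (ℓ + 1) t
        = exp (-(β * j * t)) * (z * (β * j) *
            (z ^ ℓ * ∫ s in (0 : ℝ)..t, exp (β * j * s) * Iex β (j + 1) ℓ s)) := by
          rw [Iex_succ β hj]; ring
      _ ≤ exp (-(β * j * t)) * (z * (β * j) *
            ∫ s in (0 : ℝ)..t, exp (β * j * s) * yuleGenFun β z s ^ (j + 1)) := by
          gcongr
      _ = yuleGenFun β z t ^ j - exp (-(β * j * t)) := by
          rw [integral_exp_mul_yuleGenFun_pow j hD', mul_sub, ← mul_assoc, ← exp_add]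
          simp
      _ ≤ yuleGenFun β z t ^ j := sub_le_self _ (exp_pos _).le

lemma exp_div_three_le_one_add_half {x : ℝ} (hx₀ : 0 ≤ x) (hx₁ : x ≤ 1) :
    exp (x / 3) ≤ 1 + x / 2 := by
  calc exp (x / 3) ≤ 1 / (1 - x / 3) :=
        exp_bound_div_one_sub_of_interval (by positivity) (by linarith)
    _ ≤ 1 + x / 2 := by
        rw [div_le_iff₀ (by linarith)]
        nlinarith

lemma Iex_le_exp_sub {β t : ℝ} (hβ : 0 ≤ β) (ht : 0 ≤ t) {j : ℕ} (hj : j ≠ 0) (ℓ : ℕ) :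
    Iex β j ℓ t ≤ exp (j - exp (-(β * t)) / 3 * ℓ) := by
  set p := exp (-(β * t)) with hp
  have hp₀ : 0 < p := exp_pos _
  have hp₁ : p ≤ 1 := exp_le_one_iff.2 (neg_nonpos.2 (mul_nonneg hβ ht))
  have hdenom : 1 - (1 + p / 2) * (1 - p) = p * (1 + p) / 2 := by ring
  have hq : yuleGenFun β (1 + p / 2) t = 2 / (1 + p) := by
    rw [yuleGenFun, ← hp, hdenom]
    field_simp
  have hq_le : 2 / (1 + p) ≤ exp 1 :=
    (div_le_self zero_le_two (by linarith)).trans exp_one_gt_two.le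
  have hchernoff : (1 + p / 2) ^ ℓ * Iex β j ℓ t ≤ (2 / (1 + p)) ^ j :=
    hq ▸ pow_mul_Iex_le_yuleGenFun_pow hβ (by linarith) ℓ hj ht (by rw [← hp, hdenom]; positivity)
  calc Iex β j ℓ t ≤ (2 / (1 + p)) ^ j / (1 + p / 2) ^ ℓ := by
        rwa [le_div_iff₀' (by positivity)]
    _ ≤ exp 1 ^ j / exp (p / 3) ^ ℓ := by
        gcongr
        exact exp_div_three_le_one_add_half hp₀.le hp₁
    _ = exp (j - p / 3 * ℓ) := by
        rw [← exp_nat_mul, ← exp_nat_mul, ← exp_sub, mul_one, mul_comm (ℓ : ℝ)]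

lemma two_mul_exp_neg_two_mul_sub_one_le {x : ℝ} (hx : 0 ≤ x) :
    2 * exp (-(2 * x) - 1) ≤ exp (-x) := by
  calc 2 * exp (-(2 * x) - 1) ≤ exp 1 * exp (-(2 * x) - 1) := by
        gcongr
        exact exp_one_gt_two.le
    _ = exp (-(2 * x)) := by rw [← exp_add, add_sub_cancel]
    _ ≤ exp (-x) := exp_le_exp.2 (by linarith)

/-- Exponential decay estimate: if `j ≤ (1/3)e^{-2βt-1}ℓ` then
`I^ℓ_j(t) ≤ exp(-(1/3)e^{-2βt-1}ℓ)`. -/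
theorem Iex_exp_bound (β : ℝ) (hβ : 0 < β) (j ℓ : ℕ) (hj : 1 ≤ j) (hℓ : 1 ≤ ℓ)
    (t : ℝ) (ht : 0 ≤ t)
    (hjl : (j : ℝ) ≤ (1 / 3) * Real.exp (-(2 * β * t) - 1) * (ℓ : ℝ)) :
    Iex β j ℓ t ≤ Real.exp (-((1 / 3) * Real.exp (-(2 * β * t) - 1) * (ℓ : ℝ))) := by
  have hexp : 2 * exp (-(2 * β * t) - 1) ≤ exp (-(β * t)) := by
    simpa only [mul_assoc] using two_mul_exp_neg_two_mul_sub_one_le (mul_nonneg hβ.le ht)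
  have hrate : 2 * (1 / 3 * exp (-(2 * β * t) - 1)) * ℓ ≤ exp (-(β * t)) / 3 * ℓ := by
    gcongr
    linarith
  calc Iex β j ℓ t ≤ exp (j - exp (-(β * t)) / 3 * ℓ) :=
        Iex_le_exp_sub hβ.le ht (Nat.one_le_iff_ne_zero.1 hj) ℓ
    _ ≤ exp (-(1 / 3 * exp (-(2 * β * t) - 1) * ℓ)) := exp_le_exp.2 (by linarith)
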